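/- Let Z = V + iU be an n×n complex symmetric matrix with U positive definite, and let K = (I + iZ)(I − iZ)⁻¹. Then U = (I + K)⁻¹ (I − K K̄) (I + K̄)⁻¹, where K̄ denotes entrywise complex conjugation. -/

import Mathlib

open Matrix Complex

/-!
`K` and `K̄` are the Cayley transforms of `x = iZ` and of its entrywise conjugate `y`, where
`x + y = -2U`. Since `1 + K = 2(1 - x)⁻¹` and `1 + K̄ = 2(1 - y)⁻¹`, clearing denominators gives
`2(1 - K K̄) = -(1 + K)(x + y)(1 + K̄)`, an identity valid in any ring. The matrix
`1 - iZ` is invertible because by symmetry its Hermitian part is `1 + U`, and a matrix with positive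
definite Hermitian part has trivial kernel.
-/

section Cayley

open scoped Ring

variable {R : Type*} [Ring R] {x y u : R}

/-- The Cayley transform `(1 + x)(1 - x)⁻¹` of a ring element. It is meaningful only when `1 - x` is
a unit; otherwise the total inverse `⁻¹ʳ` makes it `0`. -/
noncomputable def cayley (x : R) : R := (1 + x) * (1 - x)⁻¹ʳ

theorem map_cayley {S : Type*} [Ring S] (f : R →+* S) (hx : IsUnit (1 - x)) :
    f (cayley x) = cayley (f x) := by
  have hinv : f (1 - x)⁻¹ʳ = (f (1 - x))⁻¹ʳ := by
    obtain ⟨v, hv⟩ := hx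
    rw [← hv, Ring.inverse_unit]
    exact (Ring.inverse_unit (Units.map (f : R →* S) v)).symm
  rw [cayley, cayley, map_mul, hinv, map_add, map_sub, map_one]

theorem one_add_cayley (hx : IsUnit (1 - x)) : 1 + cayley x = 2 * (1 - x)⁻¹ʳ := calc
  1 + cayley x = ((1 - x) + (1 + x)) * (1 - x)⁻¹ʳ := by
    rw [add_mul, Ring.mul_inverse_cancel _ hx, cayley]
  _ = 2 * (1 - x)⁻¹ʳ := by rw [sub_add_add_cancel, one_add_one_eq_two]

theorem isUnit_one_add_cayley (h2 : IsUnit (2 : R)) (hx : IsUnit (1 - x)) :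
    IsUnit (1 + cayley x) := by
  rw [one_add_cayley hx]
  exact h2.mul hx.ringInverse

theorem two_mul_one_sub_cayley_mul_cayley (hx : IsUnit (1 - x)) (hy : IsUnit (1 - y)) :
    2 * (1 - cayley x * cayley y) = -((1 + cayley x) * (x + y) * (1 + cayley y)) := by
  have hcx : cayley x = 2 * (1 - x)⁻¹ʳ - 1 := eq_sub_of_add_eq' (one_add_cayley hx)
  have hcy : cayley y = 2 * (1 - y)⁻¹ʳ - 1 := eq_sub_of_add_eq' (one_add_cayley hy)
  have hx' : (1 - x)⁻¹ʳ * (1 - x) = 1 := Ring.inverse_mul_cancel _ hx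
  have hy' : (1 - y) * (1 - y)⁻¹ʳ = 1 := Ring.mul_inverse_cancel _ hy
  rw [hcx, hcy]
  generalize (1 - x)⁻¹ʳ = a at *
  generalize (1 - y)⁻¹ʳ = b at *
  linear_combination (norm := noncomm_ring) -4 * hx' * b - 4 * a * hy'

theorem eq_inverse_mul_one_sub_cayley_mul_inverse (h2 : IsUnit (2 : R))
    (hx : IsUnit (1 - x)) (hy : IsUnit (1 - y)) (hu : x + y = -(2 * u)) :
    u = (1 + cayley x)⁻¹ʳ * (1 - cayley x * cayley y) * (1 + cayley y)⁻¹ʳ := by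
  have hfactor : 1 - cayley x * cayley y = (1 + cayley x) * u * (1 + cayley y) := by
    refine h2.mul_left_cancel ?_
    rw [two_mul_one_sub_cayley_mul_cayley hx hy, hu]
    noncomm_ring
  rw [hfactor, mul_assoc, Ring.mul_inverse_cancel_right _ _ (isUnit_one_add_cayley h2 hy),
    Ring.inverse_mul_cancel_left _ _ (isUnit_one_add_cayley h2 hx)]

end Cayley

section PosDef

open scoped ComplexOrder

theorem isUnit_of_posDef_add_conjTranspose {n K : Type*} [Fintype n] [DecidableEq n] [Field K]
    [PartialOrder K] [StarRing K] {A : Matrix n n K} (hA : (A + Aᴴ).PosDef) : IsUnit A := by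
  by_contra h
  obtain ⟨v, hv, hAv⟩ : ∃ v ≠ 0, A *ᵥ v = 0 := by
    simpa [isUnit_iff_isUnit_det, exists_mulVec_eq_zero_iff] using h
  have hform : star v ⬝ᵥ (A + Aᴴ) *ᵥ v = 0 := by
    rw [add_mulVec, dotProduct_add, dotProduct_mulVec _ Aᴴ, ← star_mulVec, hAv, star_zero,
      dotProduct_zero, zero_dotProduct, add_zero]
  exact (hA.dotProduct_mulVec_pos hv).ne' hform

theorem posSemidef_map {n 𝕜 R : Type*} [Finite n] [RCLike 𝕜] [CommRing R] [PartialOrder R]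
    [StarRing R] [StarOrderedRing R] {A : Matrix n n 𝕜} (hA : A.PosSemidef) (f : 𝕜 →+* R)
    (hf : Function.Semiconj f star star) : (A.map f).PosSemidef := by
  classical
  have := Fintype.ofFinite n
  obtain ⟨B, rfl⟩ : ∃ B : Matrix n n 𝕜, A = Bᴴ * B := by
    open scoped MatrixOrder in
    exact CStarAlgebra.nonneg_iff_eq_star_mul_self.mp hA.nonneg
  rw [Matrix.map_mul, conjTranspose_map _ hf]
  exact posSemidef_conjTranspose_mul_self _

end PosDef

section ComplexSymmetric

open scoped ComplexOrder

theorem I_smul_add_map_conj {m n : Type*} (V U : Matrix m n ℝ) :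
    I • (V.map ofReal + I • U.map ofReal)
      + (I • (V.map ofReal + I • U.map ofReal)).map (starRingEnd ℂ)
      = -((2 : ℂ) • U.map ofReal) := by
  ext i j
  simp [Complex.ext_iff, two_mul, -neg_add_rev, neg_add]

variable {n : Type*} [Fintype n] [DecidableEq n] {V U : Matrix n n ℝ}

theorem isUnit_one_sub_I_smul (hV : V.IsSymm) (hU : U.PosSemidef) :
    IsUnit (1 - I • (V.map ofReal + I • U.map ofReal)) := by
  set T := I • (V.map ofReal + I • U.map ofReal)
  have hUsymm : U.IsSymm := isHermitian_iff_isSymm.1 hU.isHermitian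
  have hTsymm : T.IsSymm := ((hV.map ofReal).add ((hUsymm.map ofReal).smul I)).smul I
  have hTH : Tᴴ = T.map (starRingEnd ℂ) := by
    rw [conjTranspose, hTsymm.eq]
    rfl
  have hsum : (1 - T) + (1 - T)ᴴ = (2 : ℂ) • (1 + U.map ofReal) := by
    rw [conjTranspose_sub, conjTranspose_one, hTH, sub_add_sub_comm, I_smul_add_map_conj]
    module
  have hUpos : (U.map ofReal).PosSemidef :=
    posSemidef_map hU ofRealHom fun a => (conj_ofReal a).symm
  refine isUnit_of_posDef_add_conjTranspose ?_
  rw [hsum]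
  exact (PosDef.one.add_posSemidef hUpos).smul two_pos

end ComplexSymmetric

theorem stmt_3_general {n : Type*} [Fintype n] [DecidableEq n] (V U : Matrix n n ℝ)
    (Z K : Matrix n n ℂ)
    (hZ : Z = V.map Complex.ofReal + Complex.I • U.map Complex.ofReal)
    (hK : K = (1 + Complex.I • Z) * (1 - Complex.I • Z)⁻¹)
    (hunit : IsUnit (1 - Complex.I • Z)) :
    U.map Complex.ofReal
      = (1 + K)⁻¹ * (1 - K * K.map (starRingEnd ℂ))
          * (1 + K.map (starRingEnd ℂ))⁻¹ := by
  let conj : Matrix n n ℂ →+* Matrix n n ℂ := (starRingEnd ℂ).mapMatrix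
  have hKcayley : K = cayley (I • Z) := by rw [hK, nonsing_inv_eq_ringInverse, cayley]
  have hKconj : K.map (starRingEnd ℂ) = cayley (conj (I • Z)) := by
    rw [← map_cayley conj hunit, ← hKcayley, RingHom.mapMatrix_apply]
  have hunit_conj : IsUnit (1 - conj (I • Z)) := by simpa using hunit.map conj
  have htwo : IsUnit (2 : Matrix n n ℂ) := by
    simpa only [map_ofNat] using (IsUnit.mk0 (2 : ℂ) two_ne_zero).map (algebraMap ℂ (Matrix n n ℂ))
  have hsum : I • Z + conj (I • Z) = -(2 * U.map ofReal) := by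
    rw [hZ, RingHom.mapMatrix_apply, I_smul_add_map_conj, ofNat_smul_eq_nsmul, nsmul_eq_mul,
      Nat.cast_ofNat]
  rw [hKconj, hKcayley, nonsing_inv_eq_ringInverse, nonsing_inv_eq_ringInverse]
  exact eq_inverse_mul_one_sub_cayley_mul_inverse htwo hunit hunit_conj hsum

theorem stmt_3 {n : ℕ} (V U : Matrix (Fin n) (Fin n) ℝ)
    (hV : V = Vᵀ) (hU : U = Uᵀ) (hUpd : U.PosDef)
    (Z K : Matrix (Fin n) (Fin n) ℂ)
    (hZ : Z = V.map Complex.ofReal + Complex.I • U.map Complex.ofReal)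
    (hK : K = (1 + Complex.I • Z) * (1 - Complex.I • Z)⁻¹) :
    U.map Complex.ofReal
      = (1 + K)⁻¹ * (1 - K * K.map (starRingEnd ℂ))
          * (1 + K.map (starRingEnd ℂ))⁻¹ :=
  stmt_3_general V U Z K hZ hK (hZ ▸ isUnit_one_sub_I_smul hV.symm hUpd.posSemidef)
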